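/- There exists a visibly pushdown game G with a VLDL winning condition such that Player 0 has a winning strategy in G but no finite-memory winning strategy; likewise, there exists a visibly pushdown game G' with a VLDL winning condition such that Player 1 has a winning strategy in G' but no finite-memory winning strategy. -/

import Mathlib

/-!
The game: one player (the challenger) pushes a word of bits of her choice, calling with letters
that carry the bit; at a moment of her choice control passes to the other player (the responder),
who from then on only pops, announcing a bit with each return. The arena pushes the same stack
symbol for both bits, so configurations record only the stack height, whereas the stack of an
automaton reading the trace can store the bits. The responder loses iff some return announces a
bit different from the one pushed by the matching call; `sat_mismatch_iff` shows that this is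
expressed by a single diamond formula over a visibly pushdown guard.

The responder wins by remembering the whole pushed word (`responder_wins`). A strategy with `k`
memory states does not win (`not_finiteMemory`): there are `2 ^ k > k` words of length `k`, so two
of them (both followed by one fixed last bit, as the last letter belongs to the current vertex)
lead to the same vertex with the same memory state. The responder's answers after them
coincide, so they cannot be correct for both.

The construction is uniform in which of the two players is the responder.
-/

/-- The three kinds of letters of a pushdown alphabet: calls, returns, local actions. -/
inductive SymKind : Type
  | call | ret | loc
deriving DecidableEq

/-- The data of a visibly pushdown automaton with states `Fin n` and stack alphabet
`Fin m` (plus an implicit bottom marker `⊥`, represented by the empty stack):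
call-, return- and local transitions, initial states and final states. -/
structure VPAData (A : Type) (n m : ℕ) where
  callΔ : Fin n → A → Fin n → Fin m → Bool
  retΔ  : Fin n → A → Option (Fin m) → Fin n → Bool
  locΔ  : Fin n → A → Fin n → Bool
  start : Fin n → Bool
  final : Fin n → Bool

/-- One step of a visibly pushdown system on configurations (state, stack). Calls push,
returns pop (reading `⊥`, i.e. `none`, on the empty stack and leaving it unchanged),
local actions leave the stack unchanged. -/
def vstep {A : Type} (kind : A → SymKind) {n m : ℕ}
    (callΔ : Fin n → A → Fin n → Fin m → Bool)
    (retΔ : Fin n → A → Option (Fin m) → Fin n → Bool)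
    (locΔ : Fin n → A → Fin n → Bool) :
    Fin n × List (Fin m) → A → Fin n × List (Fin m) → Prop :=
  fun c a c' =>
    match kind a with
    | .call => ∃ g, callΔ c.1 a c'.1 g = true ∧ c'.2 = g :: c.2
    | .ret => (∃ g s, c.2 = g :: s ∧ retΔ c.1 a (some g) c'.1 = true ∧ c'.2 = s) ∨
        (c.2 = [] ∧ retΔ c.1 a none c'.1 = true ∧ c'.2 = [])
    | .loc => locΔ c.1 a c'.1 = true ∧ c'.2 = c.2

def VPAData.step {A : Type} {n m : ℕ} (M : VPAData A n m) (kind : A → SymKind) :=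
  vstep kind M.callΔ M.retΔ M.locΔ

/-- Büchi acceptance for a visibly pushdown automaton: some initial infinite run
starting with empty stack visits final states infinitely often. -/
def VPAData.BuchiAccepts {A : Type} {n m : ℕ} (M : VPAData A n m) (kind : A → SymKind)
    (α : ℕ → A) : Prop :=
  ∃ ρ : ℕ → Fin n × List (Fin m),
    M.start (ρ 0).1 = true ∧ (ρ 0).2 = [] ∧
    (∀ i, M.step kind (ρ i) (α i) (ρ (i+1))) ∧
    (∀ i, ∃ j, i ≤ j ∧ M.final (ρ j).1 = true)

/-- VLDL formulas: atoms (from `V`), Boolean connectives, and temporal operators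
`⟨A⟩φ`/`[A]φ` guarded by testing visibly pushdown automata over the alphabet `A`;
the guard is given by its `VPAData` together with the map `t` assigning a test
formula to every state. -/
inductive VLDL (V A : Type) : Type
  | atom (v : V)
  | neg (φ : VLDL V A)
  | and (φ ψ : VLDL V A)
  | or (φ ψ : VLDL V A)
  | dia (n m : ℕ) (M : VPAData A n m) (t : Fin n → VLDL V A) (φ : VLDL V A)
  | box (n m : ℕ) (M : VPAData A n m) (t : Fin n → VLDL V A) (φ : VLDL V A)

/-- Satisfaction of VLDL formulas on infinite words `α : ℕ → A` at a position `k`,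
where `val v a` states that atom `v` holds at letter `a`. The guard relation
`(k, l) ∈ R_A(α)` is inlined: there is an initial accepting run of the guard on
`α_k ⋯ α_{l-1}` all of whose states' tests are satisfied at the respective positions. -/
def VLDL.sat {V A : Type} (val : V → A → Prop) (kind : A → SymKind) :
    VLDL V A → (ℕ → A) → ℕ → Prop
  | .atom v, α, k => val v (α k)
  | .neg φ, α, k => ¬ VLDL.sat val kind φ α k
  | .and φ ψ, α, k => VLDL.sat val kind φ α k ∧ VLDL.sat val kind ψ α k
  | .or φ ψ, α, k => VLDL.sat val kind φ α k ∨ VLDL.sat val kind ψ α k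
  | .dia n m M t φ, α, k => ∃ l, k ≤ l ∧
      (∃ ρ : ℕ → Fin n × List (Fin m),
        M.start (ρ k).1 = true ∧ (ρ k).2 = [] ∧
        (∀ i, k ≤ i → i < l → M.step kind (ρ i) (α i) (ρ (i+1))) ∧
        M.final (ρ l).1 = true ∧
        (∀ i, k ≤ i → i ≤ l → VLDL.sat val kind (t (ρ i).1) α i)) ∧
      VLDL.sat val kind φ α l
  | .box n m M t φ, α, k => ∀ l, k ≤ l →
      (∃ ρ : ℕ → Fin n × List (Fin m),
        M.start (ρ k).1 = true ∧ (ρ k).2 = [] ∧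
        (∀ i, k ≤ i → i < l → M.step kind (ρ i) (α i) (ρ (i+1))) ∧
        M.final (ρ l).1 = true ∧
        (∀ i, k ≤ i → i ≤ l → VLDL.sat val kind (t (ρ i).1) α i)) →
      VLDL.sat val kind φ α l

/-- The size of a VLDL formula: the number of subformulas (including the tests of all
guard automata) plus the total number of states of all guard automata. -/
def VLDL.size {V A : Type} : VLDL V A → ℕ
  | .atom _ => 1
  | .neg φ => φ.size + 1
  | .and φ ψ => φ.size + ψ.size + 1
  | .or φ ψ => φ.size + ψ.size + 1
  | .dia n _ _ t φ => φ.size + n + 1 + (List.ofFn (fun q => (t q).size)).sum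
  | .box n _ _ t φ => φ.size + n + 1 + (List.ofFn (fun q => (t q).size)).sum

/-- A visibly pushdown game arena: a visibly pushdown system over `2^P` together with
a partition of the states between Player 0 (`owner q = false`) and Player 1
(`owner q = true`), and an initial state. -/
structure VPG (P : Type) (n m : ℕ) where
  callΔ : Fin n → (P → Bool) → Fin n → Fin m → Bool
  retΔ  : Fin n → (P → Bool) → Option (Fin m) → Fin n → Bool
  locΔ  : Fin n → (P → Bool) → Fin n → Bool
  owner : Fin n → Bool
  start : Fin n

/-- Vertices of the induced two-player game: configurations of the system together
with the letter by which the vertex was reached. -/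
abbrev GVtx (P : Type) (n m : ℕ) := (Fin n × List (Fin m)) × (P → Bool)

/-- Edges of the induced game: `(c, a) ⟶ (c', a')` iff the system has an `a'`-labelled
move from configuration `c` to configuration `c'`. -/
def VPG.edge {P : Type} {n m : ℕ} (G : VPG P n m) (kind : (P → Bool) → SymKind)
    (v v' : GVtx P n m) : Prop :=
  vstep kind G.callΔ G.retΔ G.locΔ v.1 v'.2 v'.1

/-- A play: an infinite path through the game graph starting in the initial
configuration `(q_I, ⊥)`. -/
def VPG.IsPlay {P : Type} {n m : ℕ} (G : VPG P n m) (kind : (P → Bool) → SymKind)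
    (ρ : ℕ → GVtx P n m) : Prop :=
  (ρ 0).1 = (G.start, []) ∧ ∀ i, G.edge kind (ρ i) (ρ (i + 1))

/-- The trace of a play: the sequence of labels of its edges (omitting the label of the
initial vertex). -/
def VPG.trace {P : Type} {n m : ℕ} (ρ : ℕ → GVtx P n m) : ℕ → (P → Bool) :=
  fun i => (ρ (i + 1)).2

/-- A strategy (mapping the history and the current vertex to the next vertex) is legal
if it always prescribes moving along an edge. -/
def VPG.Legal {P : Type} {n m : ℕ} (G : VPG P n m) (kind : (P → Bool) → SymKind)
    (σ : List (GVtx P n m) → GVtx P n m → GVtx P n m) : Prop :=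
  ∀ h v, G.edge kind v (σ h v)

/-- A play is consistent with a strategy of player `i` if at every vertex of player `i`
the play follows the strategy. -/
def VPG.Consistent {P : Type} {n m : ℕ} (G : VPG P n m) (i : Bool)
    (σ : List (GVtx P n m) → GVtx P n m → GVtx P n m) (ρ : ℕ → GVtx P n m) : Prop :=
  ∀ k, G.owner (ρ k).1.1 = i → ρ (k + 1) = σ ((List.range k).map ρ) (ρ k)

/-- `σ` is a winning strategy for player `i` (`false` = Player 0, `true` = Player 1) in
the visibly pushdown game with arena `G` and VLDL winning condition `φ`: every play
consistent with `σ` has a trace that is a model of `φ` (for Player 0), resp. not a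
model of `φ` (for Player 1). -/
def VPG.WinningFor {P : Type} {n m : ℕ} (G : VPG P n m) (kind : (P → Bool) → SymKind)
    (φ : VLDL P (P → Bool)) (i : Bool)
    (σ : List (GVtx P n m) → GVtx P n m → GVtx P n m) : Prop :=
  G.Legal kind σ ∧
    ∀ ρ : ℕ → GVtx P n m, G.IsPlay kind ρ → G.Consistent i σ ρ →
      if i then ¬ VLDL.sat (fun p a => a p = true) kind φ (VPG.trace ρ) 0
      else VLDL.sat (fun p a => a p = true) kind φ (VPG.trace ρ) 0

/-- A strategy has finite memory if it can be implemented by a finite memory structure: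
a finite set `Fin k` of memory states with an initial state and an update function such
that the strategy's choice depends only on the current vertex and the memory state
obtained by folding the update function over the history. -/
def FiniteMemory {P : Type} {n m : ℕ}
    (σ : List (GVtx P n m) → GVtx P n m → GVtx P n m) : Prop :=
  ∃ (k : ℕ) (m₀ : Fin k) (upd : Fin k → GVtx P n m → Fin k)
    (act : Fin k → GVtx P n m → GVtx P n m),
    ∀ h v, σ h v = act (h.foldl upd m₀) v

namespace BitMatching

/-! ### The game -/

/-- The letter with return flag `r` and bit `b`. A letter `a : Bool → Bool` over the two
propositions `true`, `false` is a return iff `a true` holds, and carries the bit `a false`. -/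
def letter (r b : Bool) : Bool → Bool := fun p => if p then r else b

/-- Letters with the return flag are returns; all others are calls. -/
def kind (a : Bool → Bool) : SymKind := if a true then .ret else .call

/-- The stack symbol encoding the bit of a letter. -/
def sym (a : Bool → Bool) : Fin 2 := if a false then 1 else 0

/-- The arena with responder `i`: in state `0` the challenger calls, choosing the bit and
whether to hand over to state `1`, where the responder pops forever. The stack alphabet has one
symbol, so that the bits are not stored. -/
def arena (i : Bool) : VPG Bool 2 1 where
  callΔ q _ _ _ := q == 0
  retΔ q _ _ q' := q == 1 && q' == 1
  locΔ _ _ _ := false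
  owner q := if q = 1 then i else !i
  start := 0

/-- The guard detecting a mismatch: in state `0` it stores the bits of the calls, and on a return
whose bit differs from the popped one it may move to the final state `1`. -/
def guard : VPAData (Bool → Bool) 2 2 where
  callΔ q a q' g := q == 0 && q' == 0 && g == sym a
  retΔ q a g q' := q == 0 && (q' == 0 || (g != none && g != some (sym a)))
  locΔ _ _ _ := false
  start q := q == 0
  final q := q == 1

/-- A tautology. -/
def top : VLDL Bool (Bool → Bool) := .or (.atom true) (.neg (.atom true))

/-- The formula stating that some return announces a wrong bit. -/
def mismatch : VLDL Bool (Bool → Bool) := .dia 2 2 guard (fun _ => top) top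

/-- The winning condition of the game with responder `i`: a mismatch is winning for the
challenger. -/
def condition (i : Bool) : VLDL Bool (Bool → Bool) := if i then mismatch else .neg mismatch

/-! ### The bit stack of a trace -/

/-- The effect of a letter on the stack of bits. -/
def push (s : List (Fin 2)) (a : Bool → Bool) : List (Fin 2) :=
  if a true then s.tail else sym a :: s

/-- The stack of bits after the first `j` letters of `α`. -/
def bits (α : ℕ → Bool → Bool) : ℕ → List (Fin 2)
  | 0 => []
  | j + 1 => push (bits α j) (α j)

lemma bits_eq_foldl (α : ℕ → Bool → Bool) (j : ℕ) :
    bits α j = ((List.range j).map α).foldl push [] := by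
  induction j with
  | zero => rfl
  | succ j ih => simp [bits, List.range_succ, ih]

/-- The letter `α l` is a return announcing a bit different from the popped one. -/
def WrongAt (α : ℕ → Bool → Bool) (l : ℕ) : Prop :=
  α l true = true ∧ ∃ g s, bits α l = g :: s ∧ g ≠ sym (α l)

lemma sat_top (α : ℕ → Bool → Bool) (k : ℕ) :
    VLDL.sat (fun p a => a p = true) kind top α k := by
  simp only [top, VLDL.sat]
  exact em _

/-- The diamond formula `mismatch` expresses that some return is wrong. -/
lemma sat_mismatch_iff (α : ℕ → Bool → Bool) :
    VLDL.sat (fun p a => a p = true) kind mismatch α 0 ↔ ∃ l, WrongAt α l := by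
  simp only [mismatch, VLDL.sat]
  constructor
  · rintro ⟨l, -, ⟨ρ, hs, hs', hstep, hf, -⟩, -⟩
    by_contra hno
    have key : ∀ j, j ≤ l → ρ j = (0, bits α j) := by
      intro j
      induction j with
      | zero =>
        intro _
        refine Prod.ext ?_ hs'
        simpa [guard] using hs
      | succ j ih =>
        intro hj
        have h := hstep j (Nat.zero_le _) hj
        rw [ih (by omega)] at h
        unfold VPAData.step vstep kind at h
        by_cases hr : α j true = true
        · simp only [hr, if_true] at h
          rcases h with ⟨g, s, h1, h2, h3⟩ | ⟨h1, h2, h3⟩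
          · have hg : g = sym (α j) := by
              by_contra hg
              exact hno ⟨j, hr, g, s, h1, hg⟩
            refine Prod.ext ?_ ?_
            · simpa [guard, hg] using h2
            · simp [bits, push, hr, h1, h3]
          · refine Prod.ext ?_ ?_
            · simpa [guard] using h2
            · simp [bits, push, hr, h1, h3]
        · simp only [hr] at h
          obtain ⟨g, h1, h2⟩ := h
          simp [guard] at h1
          refine Prod.ext h1.1 ?_
          simp [bits, push, hr, h2, h1.2]
    rw [key l le_rfl] at hf
    simp [guard] at hf
  · rintro ⟨l, hr, g, s, hg, hne⟩
    -- Stay in state `0` before the wrong return at position `l`, and use it to accept.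
    refine ⟨l + 1, Nat.zero_le _,
      ⟨fun j => (if j = l + 1 then 1 else 0, bits α j), ?_, rfl, ?_, ?_, ?_⟩, sat_top _ _⟩
    · simp [guard]
    · intro j _ hj
      unfold VPAData.step vstep kind
      by_cases hj' : j = l
      · subst hj'
        simp only [hr, if_true]
        left
        refine ⟨g, s, hg, ?_, ?_⟩
        · simp [guard, hne]
        · simp [bits, push, hr, hg]
      · have h1 : j ≠ l + 1 := by omega
        by_cases hr' : α j true = true
        · simp only [hr', if_true, h1, Nat.add_right_cancel_iff, hj', if_false]
          cases hb : bits α j with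
          | nil => right; simp [guard, bits, push, hr', hb]
          | cons g s => left; simp [guard, bits, push, hr', hb]
        · simp [hr', h1, hj', guard, bits, push]
    · simp [guard]
    · intro j _ _
      exact sat_top _ _

lemma winningFor_iff (i : Bool) (σ : List (GVtx Bool 2 1) → GVtx Bool 2 1 → GVtx Bool 2 1) :
    (arena i).WinningFor kind (condition i) i σ ↔
      (arena i).Legal kind σ ∧ ∀ ρ, (arena i).IsPlay kind ρ → (arena i).Consistent i σ ρ →
        ∀ l, ¬ WrongAt (VPG.trace ρ) l := by
  unfold VPG.WinningFor
  refine and_congr_right fun _ => forall_congr' fun ρ => imp_congr_right fun _ =>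
    imp_congr_right fun _ => ?_
  cases i
  · simp only [condition, Bool.false_eq_true, if_false, VLDL.sat, sat_mismatch_iff, not_exists]
  · simp only [condition, if_true, sat_mismatch_iff, not_exists]

lemma edge_iff (i : Bool) (v v' : GVtx Bool 2 1) :
    (arena i).edge kind v v' ↔
      (v'.2 true = false ∧ v.1.1 = 0 ∧ v'.1.2 = 0 :: v.1.2) ∨
      (v'.2 true = true ∧ v.1.1 = 1 ∧ v'.1.1 = 1 ∧ v'.1.2 = v.1.2.tail) := by
  unfold VPG.edge vstep kind
  by_cases h : v'.2 true = true
  · simp only [h, if_true, arena]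
    rcases hs : v.1.2 with _ | ⟨g, s⟩
    · simp [and_assoc]
    · simp only [List.cons.injEq, reduceCtorEq, List.tail_cons]
      grind
  · simp [h, arena, Fin.exists_fin_one]

/-! ### The winning strategy -/

/-- The responder's strategy: return, announcing the bit on top of the bit stack of the history.
The label of the initial vertex does not belong to the trace, hence the `tail`. At the
challenger's vertices the choice is immaterial. -/
def strategy (h : List (GVtx Bool 2 1)) (v : GVtx Bool 2 1) : GVtx Bool 2 1 :=
  if v.1.1 = 0 then ((0, 0 :: v.1.2), letter false false)
  else ((1, v.1.2.tail),
    letter true ((((h ++ [v]).map Prod.snd).tail.foldl push []).head? == some 1))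

lemma strategy_legal (i : Bool) : (arena i).Legal kind strategy := by
  intro h v
  rw [edge_iff]
  by_cases hv : v.1.1 = 0
  · left; simp [strategy, hv, letter]
  · right
    have : v.1.1 = 1 := by omega
    simp [strategy, this, letter]

lemma history_bits (ρ : ℕ → GVtx Bool 2 1) (l : ℕ) :
    ((((List.range l).map ρ ++ [ρ l]).map Prod.snd).tail).foldl push [] =
      bits (VPG.trace ρ) l := by
  have : (List.range l).map ρ ++ [ρ l] = (List.range (l + 1)).map ρ := by
    simp [List.range_succ]
  rw [this, List.range_succ_eq_map, bits_eq_foldl]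
  simp only [List.map_cons, List.tail_cons, List.map_map]
  rfl

lemma responder_wins (i : Bool) : (arena i).WinningFor kind (condition i) i strategy := by
  rw [winningFor_iff]
  refine ⟨strategy_legal i, fun ρ hρ hc l ⟨hr, g, s, hg, hne⟩ => hne ?_⟩
  have hq : (ρ l).1.1 = 1 := by
    have h := (edge_iff _ _ _).1 (hρ.2 l)
    rcases h with h | h
    · have : (ρ (l + 1)).2 true = true := hr
      simp [this] at h
    · exact h.2.1
  have hmove := hc l (by simp [arena, hq])
  have hl : VPG.trace ρ l = letter true (g == 1) := by
    unfold VPG.trace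
    rw [hmove, strategy, history_bits, hg]
    simp [hq]
  rw [hl]
  fin_cases g <;> simp [sym, letter]

/-! ### Finite memory does not suffice -/

section Pigeonhole

variable {k : ℕ} (upd : Fin k → GVtx Bool 2 1 → Fin k)
  (act : Fin k → GVtx Bool 2 1 → GVtx Bool 2 1)

/-- The vertex after the challenger's calls: height `N + 1`, last bit `false`. -/
def handover (N : ℕ) : GVtx Bool 2 1 := ((1, List.replicate (N + 1) 0), letter false false)

/-- The first vertices of the play in which the challenger pushes the bits `w 0, …, w N`. -/
def opening (N : ℕ) (w : ℕ → Bool) : ℕ → GVtx Bool 2 1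
  | 0 => ((0, []), letter false false)
  | j + 1 => ((if j < N then 0 else 1, List.replicate (j + 1) 0), letter false (w j))

/-- Memory state and vertex after `t` moves of a finite-memory strategy from memory state `m`
and vertex `v`. -/
def response (m : Fin k) (v : GVtx Bool 2 1) : ℕ → Fin k × GVtx Bool 2 1
  | 0 => (m, v)
  | t + 1 => (upd (response m v t).1 (response m v t).2, act (response m v t).1 (response m v t).2)

/-- The memory state in which a finite-memory strategy reaches the handover after `w`. -/
def memory (m₀ : Fin k) (N : ℕ) (w : ℕ → Bool) : Fin k :=
  ((List.range (N + 1)).map (opening N w)).foldl upd m₀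

/-- The play in which the challenger pushes `w 0, …, w N` and the responder then follows a
finite-memory strategy. -/
def play (m₀ : Fin k) (N : ℕ) (w : ℕ → Bool) (j : ℕ) : GVtx Bool 2 1 :=
  if j < N + 1 then opening N w j
  else (response upd act (memory upd m₀ N w) (handover N) (j - (N + 1))).2

lemma play_of_le (m₀ : Fin k) {N : ℕ} {w : ℕ → Bool} (hw : w N = false) {j : ℕ}
    (hj : j ≤ N + 1) : play upd act m₀ N w j = opening N w j := by
  unfold play
  split_ifs with h
  · rfl
  · obtain rfl : j = N + 1 := by omega
    simp [response, opening, handover, hw]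

lemma play_add (m₀ : Fin k) (N : ℕ) (w : ℕ → Bool) (t : ℕ) :
    play upd act m₀ N w (N + 1 + t) =
      (response upd act (memory upd m₀ N w) (handover N) t).2 := by
  rw [play, if_neg (by omega), Nat.add_sub_cancel_left]

lemma memory_play (m₀ : Fin k) (N : ℕ) (w : ℕ → Bool) (t : ℕ) :
    ((List.range (N + 1 + t)).map (play upd act m₀ N w)).foldl upd m₀ =
      (response upd act (memory upd m₀ N w) (handover N) t).1 := by
  induction t with
  | zero =>
    unfold memory response
    congr 1
    refine List.map_congr_left fun j hj => ?_
    have : j < N + 1 := List.mem_range.1 hj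
    simp [play, this]
  | succ t ih =>
    rw [← Nat.add_assoc, List.range_succ, List.map_append, List.foldl_append, ih]
    simp [play_add, response]

variable {i : Bool} {σ : List (GVtx Bool 2 1) → GVtx Bool 2 1 → GVtx Bool 2 1} {m₀ : Fin k}

lemma play_succ (hσ : ∀ h v, σ h v = act (h.foldl upd m₀) v) (N : ℕ) (w : ℕ → Bool) (t : ℕ) :
    play upd act m₀ N w (N + 1 + t + 1) =
      σ ((List.range (N + 1 + t)).map (play upd act m₀ N w)) (play upd act m₀ N w (N + 1 + t)) := by
  rw [hσ, memory_play, play_add, Nat.add_assoc (N + 1), play_add]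
  rfl

lemma play_isPlay (hσ : ∀ h v, σ h v = act (h.foldl upd m₀) v) (hL : (arena i).Legal kind σ)
    {N : ℕ} {w : ℕ → Bool} (hw : w N = false) :
    (arena i).IsPlay kind (play upd act m₀ N w) := by
  refine ⟨by rw [play_of_le upd act m₀ hw (Nat.zero_le _)]; rfl, fun j => ?_⟩
  by_cases hj : j ≤ N
  · rw [play_of_le upd act m₀ hw (by omega), play_of_le upd act m₀ hw (by omega), edge_iff]
    left
    cases j with
    | zero => simp [opening, letter]
    | succ j =>
      have : j < N := hj
      simp [opening, letter, this, List.replicate_succ]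
  · obtain ⟨t, rfl⟩ : ∃ t, j = N + 1 + t := ⟨j - (N + 1), by omega⟩
    rw [play_succ upd act hσ]
    exact hL _ _

lemma play_consistent (hσ : ∀ h v, σ h v = act (h.foldl upd m₀) v)
    {N : ℕ} {w : ℕ → Bool} (hw : w N = false) :
    (arena i).Consistent i σ (play upd act m₀ N w) := by
  intro j hown
  by_cases hj : j ≤ N
  · exfalso
    rw [play_of_le upd act m₀ hw (by omega)] at hown
    have : (opening N w j).1.1 = 0 := by
      cases j with
      | zero => rfl
      | succ j =>
        have : j < N := hj
        simp [opening, this]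
    rw [this] at hown
    simp [arena] at hown
  · obtain ⟨t, rfl⟩ : ∃ t, j = N + 1 + t := ⟨j - (N + 1), by omega⟩
    exact play_succ upd act hσ N w t

/-- After the handover the responder is in state `1`, so that all letters are returns. -/
lemma play_ret (hσ : ∀ h v, σ h v = act (h.foldl upd m₀) v) (hL : (arena i).Legal kind σ)
    {N : ℕ} {w : ℕ → Bool} (hw : w N = false) (t : ℕ) :
    (play upd act m₀ N w (N + 1 + t)).1.1 = 1 ∧
      (play upd act m₀ N w (N + 1 + t + 1)).2 true = true := by
  have hP := play_isPlay upd act hσ hL hw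
  have aux : ∀ t, (play upd act m₀ N w (N + 1 + t)).1.1 = 1 →
      (play upd act m₀ N w (N + 1 + t + 1)).1.1 = 1 ∧
      (play upd act m₀ N w (N + 1 + t + 1)).2 true = true := by
    intro t ht
    rcases (edge_iff _ _ _).1 (hP.2 (N + 1 + t)) with h | h
    · rw [ht] at h
      simp at h
    · exact ⟨h.2.2.1, h.1⟩
  have h1 : ∀ t, (play upd act m₀ N w (N + 1 + t)).1.1 = 1 := by
    intro t
    induction t with
    | zero => rw [play_add]; rfl
    | succ t ih => exact (aux t ih).1
  exact ⟨h1 t, (aux t (h1 t)).2⟩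

/-- The bits `w (j - 1), …, w 0`, as a stack. -/
def word (w : ℕ → Bool) : ℕ → List (Fin 2)
  | 0 => []
  | j + 1 => sym (letter false (w j)) :: word w j

lemma bits_opening {N : ℕ} {w : ℕ → Bool} (hw : w N = false) (j : ℕ) (hj : j ≤ N + 1) :
    bits (VPG.trace (play upd act m₀ N w)) j = word w j := by
  induction j with
  | zero => rfl
  | succ j ih =>
    rw [bits, ih (by omega), VPG.trace, play_of_le upd act m₀ hw hj]
    simp [opening, push, letter, word]

lemma bits_response (hσ : ∀ h v, σ h v = act (h.foldl upd m₀) v) (hL : (arena i).Legal kind σ)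
    {N : ℕ} {w : ℕ → Bool} (hw : w N = false) (t : ℕ) (ht : t ≤ N + 1) :
    bits (VPG.trace (play upd act m₀ N w)) (N + 1 + t) = word w (N + 1 - t) := by
  induction t with
  | zero => exact bits_opening upd act hw _ le_rfl
  | succ t ih =>
    rw [← Nat.add_assoc, bits, ih (by omega), VPG.trace, push,
      if_pos (play_ret upd act hσ hL hw t).2]
    obtain ⟨s, hs⟩ : ∃ s, N + 1 - t = s + 1 := ⟨N - t, by omega⟩
    rw [hs, show N + 1 - (t + 1) = s by omega]
    rfl

/-- A winning finite-memory strategy announces the pushed bits in reverse order. -/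
lemma announced_bit (hσ : ∀ h v, σ h v = act (h.foldl upd m₀) v)
    (hwin : (arena i).WinningFor kind (condition i) i σ)
    {N : ℕ} {w : ℕ → Bool} (hw : w N = false) {j : ℕ} (hj : j ≤ N) :
    (response upd act (memory upd m₀ N w) (handover N) (N - j + 1)).2.2 false = w j := by
  rw [winningFor_iff] at hwin
  have hno := hwin.2 _ (play_isPlay upd act hσ hwin.1 hw) (play_consistent upd act hσ hw)
    (N + 1 + (N - j))
  have hb := bits_response upd act hσ hwin.1 hw (N - j) (by omega)
  rw [show N + 1 - (N - j) = j + 1 by omega, word] at hb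
  have hs : sym (letter false (w j)) =
      sym (VPG.trace (play upd act m₀ N w) (N + 1 + (N - j))) := by
    by_contra hne
    exact hno ⟨(play_ret upd act hσ hwin.1 hw (N - j)).2, _, _, hb, hne⟩
  rw [VPG.trace, Nat.add_assoc (N + 1), play_add] at hs
  revert hs
  generalize (response upd act (memory upd m₀ N w) (handover N) (N - j + 1)).2.2 = a
  cases h : a false <;> cases h' : w j <;> simp [sym, letter, h]

end Pigeonhole

lemma not_finiteMemory (i : Bool) (σ : List (GVtx Bool 2 1) → GVtx Bool 2 1 → GVtx Bool 2 1)
    (hwin : (arena i).WinningFor kind (condition i) i σ) : ¬ FiniteMemory σ := by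
  rintro ⟨k, m₀, upd, act, hσ⟩
  let ext : (Fin k → Bool) → ℕ → Bool := fun w j => if h : j < k then w ⟨j, h⟩ else false
  have hext : ∀ w, ext w k = false := fun w => by simp [ext]
  obtain ⟨w, w', hne, hmem⟩ := Fintype.exists_ne_map_eq_of_card_lt
    (fun w => memory upd m₀ k (ext w)) (by simpa using Nat.lt_two_pow_self (n := k))
  refine hne (funext fun j => ?_)
  have h := announced_bit upd act hσ hwin (hext w) j.2.le
  have h' := announced_bit upd act hσ hwin (hext w') j.2.le
  rw [show memory upd m₀ k (ext w) = memory upd m₀ k (ext w') from hmem, h'] at h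
  simpa [ext] using h.symm

end BitMatching

/-- There is a visibly pushdown game with a VLDL winning condition
that Player 0 wins, but in which no finite-memory strategy is winning for Player 0;
and likewise there is such a game for Player 1. -/
theorem vpg_vldl_requires_infinite_memory :
    (∃ (P : Type) (_ : Fintype P) (kind : (P → Bool) → SymKind) (n m : ℕ)
      (G : VPG P n m) (φ : VLDL P (P → Bool)),
      (∃ σ, G.WinningFor kind φ false σ) ∧
      ∀ σ, G.WinningFor kind φ false σ → ¬ FiniteMemory σ) ∧
    (∃ (P : Type) (_ : Fintype P) (kind : (P → Bool) → SymKind) (n m : ℕ)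
      (G : VPG P n m) (φ : VLDL P (P → Bool)),
      (∃ σ, G.WinningFor kind φ true σ) ∧
      ∀ σ, G.WinningFor kind φ true σ → ¬ FiniteMemory σ) := by
  exact ⟨⟨Bool, inferInstance, BitMatching.kind, 2, 1, BitMatching.arena false,
      BitMatching.condition false, ⟨_, BitMatching.responder_wins false⟩,
      BitMatching.not_finiteMemory false⟩,
    ⟨Bool, inferInstance, BitMatching.kind, 2, 1, BitMatching.arena true,
      BitMatching.condition true, ⟨_, BitMatching.responder_wins true⟩,
      BitMatching.not_finiteMemory true⟩⟩
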